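/- For every natural number n and every real number δ, ∫₀^∞ e^{(iδ−1)x} Lₙ(2x) dx = i·(δ−i)ⁿ / (δ+i)^{n+1}, where Lₙ is the n-th Laguerre polynomial. -/

import Mathlib

open MeasureTheory Set

/-- The `n`-th Laguerre polynomial `Lₙ(x) = Σ_{k=0}^{n} (n choose k) (−x)^k / k!`,
as a function on `ℂ`. -/
noncomputable def laguerreC (n : ℕ) (x : ℂ) : ℂ :=
  ∑ k ∈ Finset.range (n + 1), (n.choose k : ℂ) * (-x) ^ k / (Nat.factorial k : ℂ)

lemma lag_integrable (a : ℂ) (ha : a.re = 1) (k : ℕ) :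
    IntegrableOn (fun x : ℝ => (x : ℂ) ^ k * Complex.exp (-(a * x))) (Ioi 0) := by
  have h := Real.GammaIntegral_convergent (s := (k : ℝ) + 1) (by positivity)
  refine Integrable.mono' h ?_ ?_
  · exact (by fun_prop : Continuous (fun x : ℝ => (x : ℂ) ^ k * Complex.exp (-(a * x)))).aestronglyMeasurable
  · apply (ae_restrict_iff' measurableSet_Ioi).mpr
    filter_upwards with x hx
    have hx' : (0 : ℝ) < x := hx
    simp [Complex.norm_exp, ha, abs_of_pos hx', mul_comm]

lemma lag_integral (a : ℂ) (ha : a.re = 1) (k : ℕ) :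
    ∫ x in Ioi (0 : ℝ), (x : ℂ) ^ k * Complex.exp (-(a * x)) = (k.factorial : ℂ) / a ^ (k + 1) := by
  have ha0 : a ≠ 0 := by
    intro h; simp [h] at ha
  induction k with
  | zero =>
    have h := integral_exp_mul_complex_Ioi (a := -a) (by simp [ha]) 0
    simp only [neg_mul] at h
    simp [h]
  | succ k ih =>
    have hd : ∀ x ∈ Ici (0 : ℝ), HasDerivAt
        (fun x : ℝ => (x : ℂ) ^ (k + 1) * Complex.exp (-(a * x)))
        (((k : ℂ) + 1) * ((x : ℂ) ^ k * Complex.exp (-(a * x)))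
          - a * ((x : ℂ) ^ (k + 1) * Complex.exp (-(a * x)))) x := by
      intro x _
      have h1 : HasDerivAt (fun z : ℂ => z ^ (k + 1) * Complex.exp (-(a * z)))
          (((k : ℂ) + 1) * ((x : ℂ) ^ k * Complex.exp (-(a * x)))
          - a * ((x : ℂ) ^ (k + 1) * Complex.exp (-(a * x)))) (x : ℂ) := by
        have h2 := (hasDerivAt_pow (k + 1) (x : ℂ)).mul
          (((hasDerivAt_id (x : ℂ)).const_mul a).neg.cexp)
        refine h2.congr_deriv ?_
        simp
        ring
      exact h1.comp_ofReal
    have i1 := (lag_integrable a ha k).const_mul ((k : ℂ) + 1)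
    have i2 := (lag_integrable a ha (k + 1)).const_mul a
    have ht : Filter.Tendsto (fun x : ℝ => (x : ℂ) ^ (k + 1) * Complex.exp (-(a * x)))
        Filter.atTop (nhds 0) := by
      rw [tendsto_zero_iff_norm_tendsto_zero]
      refine (Real.tendsto_pow_mul_exp_neg_atTop_nhds_zero (k + 1)).congr' ?_
      filter_upwards [Filter.eventually_gt_atTop 0] with x hx
      simp [Complex.norm_exp, ha, abs_of_pos hx]
    have h := integral_Ioi_of_hasDerivAt_of_tendsto' hd (i1.sub i2) ht
    rw [integral_sub i1 i2, integral_const_mul, integral_const_mul, ih] at h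
    simp only [Complex.ofReal_zero, ne_eq, Nat.succ_ne_zero, not_false_eq_true, zero_pow,
      zero_mul, sub_zero] at h
    rw [eq_div_iff (pow_ne_zero _ ha0), Nat.factorial_succ]
    have h' := congrArg (· * a ^ (k + 1)) h
    simp only [sub_mul, zero_mul, mul_assoc, div_mul_cancel₀ _ (pow_ne_zero (k + 1) ha0)] at h'
    push_cast
    linear_combination -h'

/-- Fourier image of the Laguerre function `qₙ(2x) = e^{−x} Lₙ(2x)`:
`∫₀^∞ e^{(iδ−1)x} Lₙ(2x) dx = i (δ−i)ⁿ / (δ+i)^{n+1}` for every real `δ`. -/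
theorem laguerre_fourier_image (n : ℕ) (δ : ℝ) :
    ∫ x in Ioi (0 : ℝ), Complex.exp ((Complex.I * (δ : ℂ) - 1) * (x : ℂ)) *
        laguerreC n (2 * (x : ℂ)) =
      Complex.I * ((δ : ℂ) - Complex.I) ^ n / ((δ : ℂ) + Complex.I) ^ (n + 1) := by
  obtain ⟨a, hadef⟩ : ∃ a : ℂ, a = 1 - Complex.I * δ := ⟨_, rfl⟩
  have ha : a.re = 1 := by simp [hadef]
  have ha0 : a ≠ 0 := by
    intro h; simp [h] at ha
  have e1 : ∀ x : ℝ, Complex.exp ((Complex.I * (δ : ℂ) - 1) * (x : ℂ)) *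
        laguerreC n (2 * (x : ℂ)) = ∑ k ∈ Finset.range (n + 1),
        ((n.choose k : ℂ) * (-2) ^ k / (k.factorial : ℂ)) *
          ((x : ℂ) ^ k * Complex.exp (-(a * x))) := by
    intro x
    rw [show (Complex.I * (δ : ℂ) - 1) * (x : ℂ) = -(a * x) by rw [hadef]; ring, laguerreC,
      Finset.mul_sum]
    refine Finset.sum_congr rfl fun k _ => ?_
    rw [show -(2 * (x : ℂ)) = (-2) * x by ring, mul_pow]
    ring
  simp_rw [e1]
  rw [integral_finsetSum _ (fun k _ => (lag_integrable a ha k).const_mul _)]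
  simp_rw [integral_const_mul, lag_integral a ha]
  have e2 : ∑ k ∈ Finset.range (n + 1), ((n.choose k : ℂ) * (-2) ^ k / (k.factorial : ℂ)) *
      ((k.factorial : ℂ) / a ^ (k + 1)) = (a - 2) ^ n / a ^ (n + 1) := by
    have : (a - 2) ^ n / a ^ (n + 1) = (-2 / a + 1) ^ n / a := by
      rw [show -2 / a + 1 = (a - 2) / a by field_simp; ring, div_pow, pow_succ, div_div]
    rw [this, add_pow, Finset.sum_div]
    refine Finset.sum_congr rfl fun k _ => ?_
    have := Nat.cast_ne_zero (R := ℂ).mpr k.factorial_ne_zero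
    rw [div_pow, one_pow]
    field_simp
    ring
  rw [e2]
  have h1 : a - 2 = -Complex.I * (δ - Complex.I) := by
    rw [hadef]; linear_combination -Complex.I_sq
  have h2 : a = -Complex.I * (δ + Complex.I) := by
    rw [hadef]; linear_combination Complex.I_sq
  have h3 : (δ : ℂ) + Complex.I ≠ 0 := by
    intro h; rw [h, mul_zero] at h2; exact ha0 h2
  rw [h1, h2, mul_pow, mul_pow, pow_succ (-Complex.I)]
  have h4 : (-Complex.I) ≠ 0 := neg_ne_zero.mpr Complex.I_ne_zero
  rw [mul_assoc, mul_div_mul_left _ _ (pow_ne_zero n h4), div_eq_div_iff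
    (mul_ne_zero h4 (pow_ne_zero _ h3)) (pow_ne_zero _ h3)]
  linear_combination (δ - Complex.I) ^ n * (δ + Complex.I) ^ (n + 1) * Complex.I_sq
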